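/- The language L = { a^r b a^q b^m : r, q, m ≥ 2 and q is a perfect square } over the alphabet {a, b} is not even-linear (not 1-rated linear); consequently, L is not regular. -/

import Mathlib

/-!
For an even-linear grammar, consider a derivation of `a²ba^qb^(q+3)` with `q = j²`. Both ends of the
word are consumed at the same speed, so the sentential forms at intermediate depth have the shape
`a²ba^i B b^(i+3)`, where `B` derives `a^(q-i)b^(q-i)` (`LinDerives.exists_cut`). Cutting the
derivation at one more depth than there are rules, two cuts `i < i'` share their nonterminal `B`,
and exchanging the inner words gives `a²ba^(q+d)b^(q+d+3)` in the language, with `d = i' - i > 0`.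
As `d` is bounded in terms of the grammar only, taking `j` large gives `j² < q + d < (j+1)²`, so
`q + d` is not a square.

Non-regularity follows from the same gap between squares: a finite automaton reaches the same state
after `a²ba^k` and `a²ba^l` for some `k < l`.
-/

/-- The `i`-fold repetition `v^i` of a word `v`. -/
def wordPow {T : Type} (v : List T) : ℕ → List T
  | 0 => []
  | n + 1 => v ++ wordPow v n

/-- A production of a linear grammar: either `A → u` (with `u` a terminal word)
or `A → u B w` (with `u, w` terminal words and `B` a nonterminal). -/
structure LinearRule (T N : Type) where
  input : N
  output : List T ⊕ (List T × N × List T)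

/-- `LinDerives rs A p` : from nonterminal `A`, the linear productions in `rs`
derive the terminal word `p`. -/
inductive LinDerives {T N : Type} (rs : List (LinearRule T N)) : N → List T → Prop
  | terminal {A : N} {u : List T} (hr : (⟨A, Sum.inl u⟩ : LinearRule T N) ∈ rs) :
      LinDerives rs A u
  | step {A B : N} {u w p : List T}
      (hr : (⟨A, Sum.inr (u, B, w)⟩ : LinearRule T N) ∈ rs)
      (hp : LinDerives rs B p) :
      LinDerives rs A (u ++ p ++ w)

/-- A linear grammar: a type of nonterminals, a start symbol, and a
finite list of linear productions. -/
structure LinearGrammar (T : Type) where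
  NT : Type
  start : NT
  rules : List (LinearRule T NT)

/-- The language generated by a linear grammar. -/
def LinearGrammar.language {T : Type} (G : LinearGrammar T) : Set (List T) :=
  {p | LinDerives G.rules G.start p}

/-- A linear grammar is `(g/h)`-rated linear (`k = g/h`) if every production
`A → u B w` satisfies `h * |w| = g * |u|`. -/
def LinearGrammar.IsRated {T : Type} (g h : ℕ) (G : LinearGrammar T) : Prop :=
  ∀ r ∈ G.rules, ∀ u w, ∀ B : G.NT, r.output = Sum.inr (u, B, w) →
    h * w.length = g * u.length

/-- A grammar generates exactly the language `L`, up to the empty word. -/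
def LinearGrammar.GeneratesModEmpty {T : Type} (G : LinearGrammar T) (L : Set (List T)) :
    Prop :=
  ∀ p : List T, p ≠ [] → (p ∈ L ↔ p ∈ G.language)

/-- A language is linear if some linear grammar generates it, up to the empty word. -/
def IsLinearLang {T : Type} (L : Set (List T)) : Prop :=
  ∃ G : LinearGrammar T, G.GeneratesModEmpty L

/-- A language is `(g/h)`-rated linear if some `(g/h)`-rated linear grammar
generates it, up to the empty word. -/
def IsRatedLinearLang {T : Type} (g h : ℕ) (L : Set (List T)) : Prop :=
  ∃ G : LinearGrammar T, G.IsRated g h ∧ G.GeneratesModEmpty L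

/-- A `k`-linear grammar: a linear grammar together with the extra production
`S → S₁S₂⋯S_k` from a start symbol `S`, where none of the `Sᵢ` (the `heads`)
occurs on the right-hand side of any other production and `S` occurs in no other
production at all (the latter is automatic here, since the start symbol is kept
as a fresh symbol outside the type `NT` of the remaining nonterminals). -/
structure KLinearGrammar (T : Type) (k : ℕ) where
  NT : Type
  heads : Fin k → NT
  rules : List (LinearRule T NT)
  heads_not_on_rhs : ∀ r ∈ rules, ∀ u w, ∀ B : NT, r.output = Sum.inr (u, B, w) →
    ∀ i : Fin k, B ≠ heads i

/-- The language generated by a `k`-linear grammar: as the start symbol occurs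
only in the production `S → S₁S₂⋯S_k`, it consists of the concatenations
`p₁p₂⋯p_k` where each `pᵢ` is derived from `Sᵢ` by the linear productions. -/
def KLinearGrammar.language {T : Type} {k : ℕ} (G : KLinearGrammar T k) : Set (List T) :=
  {p | ∃ ps : Fin k → List T, p = (List.ofFn ps).flatten ∧
    ∀ i : Fin k, LinDerives G.rules (G.heads i) (ps i)}

/-- A language is `k`-linear if some `k`-linear grammar generates it, up to the
empty word. -/
def IsKLinearLang {T : Type} (k : ℕ) (L : Set (List T)) : Prop :=
  ∃ G : KLinearGrammar T k, ∀ p : List T, p ≠ [] → (p ∈ L ↔ p ∈ G.language)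

/-- A language is metalinear if it is `k`-linear for some positive integer `k`. -/
def IsMetalinearLang {T : Type} (L : Set (List T)) : Prop :=
  ∃ k : ℕ, 0 < k ∧ IsKLinearLang k L

/-- The language `{aʳ b a^q bᵐ : r, q, m ≥ 2, q a perfect square}` (Example 12).
Here the alphabet `{a, b}` is `Fin 2` with `a = 0`, `b = 1`. -/
def sqLang : Language (Fin 2) :=
  {p | ∃ r q m : ℕ, 2 ≤ r ∧ 2 ≤ q ∧ 2 ≤ m ∧ (∃ j : ℕ, q = j ^ 2) ∧
    p = List.replicate r 0 ++ [1] ++ List.replicate q 0 ++ List.replicate m 1}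

/-- The exponent of the second block of `a`s in `a²ba^Qb^m` can be read off from the word, so
membership in `sqLang` forces it to be a square. -/
lemma square_of_mem_sqLang {Q m : ℕ}
    (h : [0, 0, 1] ++ List.replicate Q (0 : Fin 2) ++ List.replicate m 1 ∈ sqLang) :
    ∃ j : ℕ, Q = j ^ 2 := by
  obtain ⟨r, q, m', hr, -, -, ⟨j, hj⟩, he⟩ := h
  obtain ⟨r, rfl⟩ : ∃ s, r = s + 2 := ⟨r - 2, by omega⟩
  cases r with
  | zero =>
    have := congrArg (List.count 0) he
    simp [List.count_replicate] at this
    exact ⟨j, by omega⟩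
  | succ r => simp [List.replicate_succ] at he

lemma not_square_of_lt {j d : ℕ} (hd : 0 < d) (hdj : d ≤ j) : ¬ ∃ i : ℕ, j ^ 2 + d = i ^ 2 := by
  rintro ⟨i, hi⟩
  have h1 : j < i := by nlinarith
  have h2 : i < j + 1 := by nlinarith
  omega

/-- Cutting a derivation of an even-linear grammar at depth `n`: if the words `u` in the
rules `A → u` and `A → u B w` have length at most `M`, then a derivation of a long enough word `p`
passes through a sentential form
`uBw` with `|u| = |w|` between `n` and `n + M`. -/
lemma LinDerives.exists_cut {T N : Type} {rs : List (LinearRule T N)} {M : ℕ}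
    (heven : ∀ A u B w, (⟨A, Sum.inr (u, B, w)⟩ : LinearRule T N) ∈ rs → w.length = u.length)
    (hterm : ∀ A u, (⟨A, Sum.inl u⟩ : LinearRule T N) ∈ rs → u.length ≤ M)
    (hstep : ∀ A u B w, (⟨A, Sum.inr (u, B, w)⟩ : LinearRule T N) ∈ rs → u.length ≤ M)
    {A : N} {p : List T} (h : LinDerives rs A p) :
    ∀ n, 2 * n + M < p.length → ∃ u B w p', p = u ++ p' ++ w ∧ w.length = u.length ∧
      n ≤ u.length ∧ u.length ≤ n + M ∧ LinDerives rs B p' ∧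
      ∀ x, LinDerives rs B x → LinDerives rs A (u ++ x ++ w) := by
  induction h with
  | terminal hr =>
    intro n hn
    have := hterm _ _ hr
    omega
  | @step A B u w p hr hp ih =>
    intro n hn
    have h1 := heven _ _ _ _ hr
    have h2 := hstep _ _ _ _ hr
    by_cases hnu : n ≤ u.length
    · exact ⟨u, B, w, p, rfl, h1, hnu, by omega, hp, fun x hx => .step hr hx⟩
    · simp only [List.length_append] at hn
      obtain ⟨u', B', w', p', rfl, h3, h4, h5, h6, h7⟩ := ih (n - u.length) (by omega)
      refine ⟨u ++ u', B', w' ++ w, p', by simp, by simp; omega, by simp; omega,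
        by simp; omega, h6, fun x hx => ?_⟩
      have := LinDerives.step hr (h7 x hx)
      simpa using this

/-- A bound on the lengths of the words `u` in the rules `A → u` and `A → u B w`. -/
lemma exists_rule_bound {T N : Type} (rs : List (LinearRule T N)) : ∃ M : ℕ,
    (∀ A u, (⟨A, Sum.inl u⟩ : LinearRule T N) ∈ rs → u.length ≤ M) ∧
    (∀ A u B w, (⟨A, Sum.inr (u, B, w)⟩ : LinearRule T N) ∈ rs → u.length ≤ M) := by
  let size : LinearRule T N → ℕ := fun r => r.output.elim List.length (fun t => t.1.length)
  have key : ∀ r ∈ rs, size r ≤ (rs.map size).sum := fun r hr =>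
    List.le_sum_of_mem (List.mem_map_of_mem hr)
  exact ⟨_, fun A u h => key _ h, fun A u B w h => key _ h⟩

lemma LinDerives.mem_inputs {T N : Type} {rs : List (LinearRule T N)} {A : N} {p : List T}
    (h : LinDerives rs A p) : A ∈ rs.map LinearRule.input := by
  cases h with
  | terminal hr => exact List.mem_map.2 ⟨_, hr, rfl⟩
  | step hr _ => exact List.mem_map.2 ⟨_, hr, rfl⟩

lemma sqLang_not_evenLinear : ¬ IsRatedLinearLang 1 1 sqLang := by
  classical
  rintro ⟨G, hrated, hgen⟩
  obtain ⟨M, hterm, hstep⟩ := exists_rule_bound G.rules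
  have heven : ∀ A u B w, (⟨A, Sum.inr (u, B, w)⟩ : LinearRule (Fin 2) G.NT) ∈ G.rules →
      w.length = u.length := fun A u B w h => by simpa using hrated _ h u w B rfl
  set R := G.rules.length with hR
  -- `j` exceeds the difference of any two of the cutting depths used below.
  obtain ⟨j, hj⟩ : ∃ j, j = R * (M + 1) + M + 2 := ⟨_, rfl⟩
  have hjq : j ≤ j ^ 2 := Nat.le_self_pow (by norm_num) j
  have hq2 : 2 ≤ j ^ 2 := by omega
  obtain ⟨q, hq⟩ : ∃ q, q = j ^ 2 := ⟨_, rfl⟩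
  rw [← hq] at hjq hq2
  -- In `a²ba^qb^(q+3)` the middle falls between the last `a` and the final block of `b`s.
  have hder : LinDerives G.rules G.start
      ([0, 0, 1] ++ List.replicate q 0 ++ List.replicate (q + 3) 1) :=
    (hgen _ (by simp)).1 ⟨2, q, q + 3, le_rfl, hq2, by omega, ⟨j, hq⟩, by simp⟩
  have hcut : ∀ k, k ≤ R → ∃ i B, k * (M + 1) ≤ i ∧ i ≤ k * (M + 1) + M ∧
      LinDerives G.rules B (List.replicate (q - i) 0 ++ List.replicate (q - i) 1) ∧
      ∀ x, LinDerives G.rules B x → LinDerives G.rules G.start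
        ([0, 0, 1] ++ List.replicate i 0 ++ x ++ List.replicate (i + 3) 1) := by
    intro k hk
    have hkR : k * (M + 1) ≤ R * (M + 1) := Nat.mul_le_mul_right _ hk
    obtain ⟨u, B, w, p, he, hwu, hu1, hu2, hp, hctx⟩ :=
      hder.exists_cut heven hterm hstep (3 + k * (M + 1)) (by simp; omega)
    obtain ⟨i, hi⟩ : ∃ i, u.length = i + 3 := ⟨u.length - 3, by omega⟩
    have hiq : i ≤ q := by omega
    have hsplit : [0, 0, 1] ++ List.replicate q (0 : Fin 2) ++ List.replicate (q + 3) 1 =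
        ([0, 0, 1] ++ List.replicate i 0) ++
          (List.replicate (q - i) 0 ++ List.replicate (q - i) 1) ++ List.replicate (i + 3) 1 := by
      have e1 : List.replicate q (0 : Fin 2) = List.replicate i 0 ++ List.replicate (q - i) 0 := by
        rw [← List.replicate_add]; congr 1; omega
      have e2 : List.replicate (q + 3) (1 : Fin 2) =
          List.replicate (q - i) 1 ++ List.replicate (i + 3) 1 := by
        rw [← List.replicate_add]; congr 1; omega
      rw [e1, e2]; simp only [List.append_assoc]
    rw [hsplit] at he
    obtain ⟨he', hw⟩ := List.append_inj' he (by simp; omega)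
    obtain ⟨hu, hp'⟩ := List.append_inj he' (by simp; omega)
    subst hu hp' hw
    exact ⟨i, B, by omega, by omega, hp, hctx⟩
  have : Nonempty G.NT := ⟨G.start⟩
  choose! i B hi1 hi2 hB hctx using hcut
  obtain ⟨k, hk, l, hl, hkl, hBkl⟩ := Finset.exists_ne_map_eq_of_card_lt_of_maps_to
    (s := Finset.range (R + 1)) (t := (G.rules.map LinearRule.input).toFinset) (f := B)
    (by
      have := List.toFinset_card_le (G.rules.map LinearRule.input)
      simp only [List.length_map] at this
      simp only [Finset.card_range]
      omega)
    (by
      intro k hk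
      simp only [Finset.coe_range, Set.mem_Iio] at hk
      exact List.mem_toFinset.2 (hB k (by omega)).mem_inputs)
  wlog hlt : k < l generalizing k l
  · exact this l hl k hk hkl.symm hBkl.symm (by omega)
  simp only [Finset.mem_range] at hk hl
  have hle : (k + 1) * (M + 1) ≤ l * (M + 1) := Nat.mul_le_mul_right _ hlt
  have hlR : l * (M + 1) ≤ R * (M + 1) := Nat.mul_le_mul_right _ (by omega)
  rw [Nat.add_mul] at hle
  have a1 := hi2 k (by omega)
  have a2 := hi1 l (by omega)
  have a3 := hi2 l (by omega)
  -- Plugging the inner word of the shallow cut into the context of the deep cut lengthens the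
  -- block of `a`s by `d = i l - i k`.
  have hnew := hctx l (by omega) _ (hBkl ▸ hB k (by omega))
  obtain ⟨d, hd⟩ : ∃ d, i l = i k + d := ⟨i l - i k, by omega⟩
  have hword : [0, 0, 1] ++ List.replicate (i l) (0 : Fin 2) ++
      (List.replicate (q - i k) 0 ++ List.replicate (q - i k) 1) ++ List.replicate (i l + 3) 1 =
      [0, 0, 1] ++ List.replicate (q + d) 0 ++ List.replicate (q + d + 3) 1 := by
    have e1 : List.replicate (q + d) (0 : Fin 2) =
        List.replicate (i l) 0 ++ List.replicate (q - i k) 0 := by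
      rw [← List.replicate_add]; congr 1; omega
    have e2 : List.replicate (q + d + 3) (1 : Fin 2) =
        List.replicate (q - i k) 1 ++ List.replicate (i l + 3) 1 := by
      rw [← List.replicate_add]; congr 1; omega
    rw [e1, e2]; simp only [List.append_assoc]
  rw [hword] at hnew
  have hsq := square_of_mem_sqLang ((hgen _ (by simp)).2 hnew)
  rw [hq] at hsq
  exact not_square_of_lt (by omega) (by omega) hsq

/-- Two of the words `a²ba^k` lead a finite automaton to the same state, which contradicts the gaps
between squares directly. -/
lemma sqLang_not_regular : ¬ sqLang.IsRegular := by
  rintro ⟨σ, _, D, hD⟩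
  obtain ⟨k, l, hkl, hs⟩ := Finite.exists_ne_map_eq_of_infinite
    (fun k : ℕ => D.eval ([0, 0, 1] ++ List.replicate k 0))
  wlog hlt : k < l generalizing k l
  · exact this l k hkl.symm hs.symm (by omega)
  obtain ⟨j, hj⟩ : ∃ j, j = l + 2 := ⟨_, rfl⟩
  have hjq : j ≤ j ^ 2 := Nat.le_self_pow (by norm_num) j
  have hword : ∀ i, [0, 0, 1] ++ List.replicate i (0 : Fin 2) ++
      (List.replicate (j ^ 2 - k) 0 ++ List.replicate 2 1) =
      [0, 0, 1] ++ List.replicate (i + (j ^ 2 - k)) 0 ++ List.replicate 2 1 := fun i => by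
    rw [List.replicate_add]; simp only [List.append_assoc]
  have hmem : ∀ x : List (Fin 2), x ∈ sqLang ↔ D.eval x ∈ D.accept := fun x => by
    rw [← hD]; rfl
  have h1 : [0, 0, 1] ++ List.replicate k (0 : Fin 2) ++
      (List.replicate (j ^ 2 - k) 0 ++ List.replicate 2 1) ∈ sqLang := by
    rw [hword, show k + (j ^ 2 - k) = j ^ 2 by omega]
    exact ⟨2, j ^ 2, 2, le_rfl, by omega, le_rfl, ⟨j, rfl⟩, by simp⟩
  have h2 : [0, 0, 1] ++ List.replicate l (0 : Fin 2) ++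
      (List.replicate (j ^ 2 - k) 0 ++ List.replicate 2 1) ∈ sqLang := by
    rw [hmem, DFA.eval, DFA.evalFrom_of_append] at h1 ⊢
    have hst : D.evalFrom D.start ([0, 0, 1] ++ List.replicate k 0) =
      D.evalFrom D.start ([0, 0, 1] ++ List.replicate l 0) := hs
    rwa [← hst]
  rw [hword, show l + (j ^ 2 - k) = j ^ 2 + (l - k) by omega] at h2
  exact not_square_of_lt (by omega) (by omega) (square_of_mem_sqLang h2)

/-- The language `{aʳ b a^q bᵐ : r, q, m ≥ 2, q a perfect square}` is not
even-linear (i.e. not `1`-rated linear); consequently it is not regular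
(Example 12). -/
theorem sqLang_not_evenLinear_not_regular :
    ¬ IsRatedLinearLang 1 1 sqLang ∧ ¬ sqLang.IsRegular :=
  ⟨sqLang_not_evenLinear, sqLang_not_regular⟩
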